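/- (New weighted lower risk bound, Theorem 3.1.) Let d ≥ 1, β = (β_1,…,β_d) with 0 < β_i ≤ 2 for all i, L > 0 and r ≥ 1. Then there exist a constant c₂(β,L,r) > 0 and n₀(β,L) ∈ ℕ such that for every t ∈ ℝ^d and every n ≥ n₀(β,L): inf_{0 < δ ≤ c₁(β,L)} inf_{T_n} sup { E_p^{⊗n} ( |T_n(X_1,…,X_n) − p(t)| / ψ^n_{p(t),β} )^r : p ∈ 𝒫_d(β,L), δ/2 ≤ p(t) ≤ δ } ≥ c₂(β,L,r), where the inner infimum runs over all measurable maps T_n : (ℝ^d)^n → ℝ, and ψ^n_{x,β} := min{ x, (x/n)^{β̄/(2β̄+1)} }. -/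

import Mathlib

open MeasureTheory Real
open scoped ENNReal BigOperators

noncomputable section

/-- `Vec d` is `ℝ^d` (with the product structure, used for anisotropic statements). -/
abbrev Vec (d : ℕ) := Fin d → ℝ

/-- Samples of size `n` from `ℝ^d`. -/
abbrev Sample (d n : ℕ) := Fin n → Vec d

/-- The largest integer strictly smaller than `b` (for `b > 0`), i.e. `⌊b⌋` in the paper's
anisotropic Hölder class notation. -/
def hfl (b : ℝ) : ℕ := ⌈b⌉₊ - 1

/-- One-dimensional Taylor polynomial of `f` at `y'` of degree `l`, evaluated at `y`. -/
def taylorPoly (f : ℝ → ℝ) (l : ℕ) (y' y : ℝ) : ℝ :=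
  ∑ k ∈ Finset.range (l + 1), iteratedDeriv k f y' / (Nat.factorial k : ℝ) * (y - y') ^ k

/-- The slice of `f : ℝ^d → ℝ` along coordinate `i` through the point `x`. -/
def sliceFun {d : ℕ} (f : Vec d → ℝ) (i : Fin d) (x : Vec d) : ℝ → ℝ :=
  fun y => f (Function.update x i y)

/-- Anisotropic Hölder condition with exponents `β = (β_1, …, β_d)` and constant `L`:
in each coordinate `i`, the slices admit derivatives up to order `⌊β i⌋` (the largest
integer strictly less than `β i`) and the Taylor remainder of degree `⌊β i⌋` is bounded
by `L |y - y'| ^ (β i)`, uniformly in the remaining coordinates. For `β i ≤ 1` this is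
the usual coordinatewise Hölder condition. -/
def HolderAniso (d : ℕ) (β : Vec d) (L : ℝ) (f : Vec d → ℝ) : Prop :=
  ∀ i : Fin d,
    (∀ x : Vec d, ContDiff ℝ (hfl (β i)) (sliceFun f i x)) ∧
    ∀ (x : Vec d) (y y' : ℝ),
      |sliceFun f i x y - taylorPoly (sliceFun f i x) (hfl (β i)) y' y| ≤ L * |y - y'| ^ (β i)

/-- `p` is a probability density on `ℝ^d` (w.r.t. Lebesgue measure). -/
def IsProbDensity (d : ℕ) (p : Vec d → ℝ) : Prop :=
  Measurable p ∧ (∀ x, 0 ≤ p x) ∧ ∫ x, p x = 1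

/-- The class `𝒫_d(β, L)` of anisotropic Hölder-smooth probability densities. -/
def Pclass (d : ℕ) (β : Vec d) (L : ℝ) (p : Vec d → ℝ) : Prop :=
  IsProbDensity d p ∧ HolderAniso d β L p

/-- The unnormalized harmonic mean `β̄ = (∑ 1/β_i)⁻¹`. -/
def betaBar {d : ℕ} (β : Vec d) : ℝ := (∑ i, (β i)⁻¹)⁻¹

/-- `c₁(β, L) = sup { ‖p‖_∞ : p ∈ 𝒫_d(β, L) }`. -/
def c1const (d : ℕ) (β : Vec d) (L : ℝ) : ℝ :=
  sSup {c | ∃ p x, Pclass d β L p ∧ c = p x}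

/-- The measure on `ℝ^d` with Lebesgue density `p`. -/
def pdfMeasure (d : ℕ) (p : Vec d → ℝ) : Measure (Vec d) :=
  volume.withDensity fun x => ENNReal.ofReal (p x)

/-- The joint law `P^{⊗n}` of an i.i.d. sample of size `n` from the density `p`. -/
def jointMeasure (d n : ℕ) (p : Vec d → ℝ) : Measure (Sample d n) :=
  Measure.pi fun _ => pdfMeasure d p

/-- The `p`-dependent rate `ψ^n_{x,β} = min{ x, (x/n)^{β̄/(2β̄+1)} }` (with `bb = β̄`). -/
def psiRate (n : ℕ) (bb x : ℝ) : ℝ := min x ((x / n) ^ (bb / (2 * bb + 1)))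

end

/-!
Le Cam's two-point method. Choose a density of the class that nearly attains `c₁(β, L)` and dilate
it isotropically, so that its peak sits at `t` and has height `δ / 2`; the dilation also lowers the
Hölder constant. Add a bump of mean zero at `t` with height `η = c ψ^n_{δ,β}` and half-widths
`(κ η) ^ (1 / β i)`, which are chosen so that the bump spends exactly the Hölder constant left over.
The two densities differ by `c ψ^n_{δ,β}` at `t`. Their `χ²` divergence is of order
`η ^ (2 + 1 / β̄) / δ`, hence at most `1 / n` for small `c`, because `n ψ ^ (2 + 1 / β̄) ≤ δ`.
So the `n`-fold products cannot be told apart, and no estimator is accurate under both.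
-/

section

open Filter Topology Uniformity Polynomial

theorem abs_eval_sub_eval_le_sum_lagrange_basis {ι : Type*} [DecidableEq ι] {s : Finset ι}
    {v : ι → ℝ} (hv : Set.InjOn v s) {Q : ℝ[X]} (hQ : Q.degree < s.card) {A : ℝ}
    (hA : ∀ i ∈ s, |Q.eval (v i)| ≤ A) (x y : ℝ) :
    |Q.eval x - Q.eval y|
      ≤ A * ∑ i ∈ s, |(Lagrange.basis s v i).eval x - (Lagrange.basis s v i).eval y| := by
  have heval (z : ℝ) :
      Q.eval z = ∑ i ∈ s, Q.eval (v i) * (Lagrange.basis s v i).eval z := by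
    conv_lhs => rw [Lagrange.eq_interpolate hv hQ]
    simp only [Lagrange.interpolate_apply, eval_finsetSum, eval_mul, eval_C]
  rw [heval x, heval y, ← Finset.sum_sub_distrib, Finset.mul_sum]
  refine (Finset.abs_sum_le_sum_abs _ _).trans (Finset.sum_le_sum fun i hi => ?_)
  rw [← mul_sub, abs_mul]
  exact mul_le_mul_of_nonneg_right (hA i hi) (abs_nonneg _)

theorem uniformContinuous_of_uniformEquicontinuous_update {ι Y : Type*} [Finite ι] [DecidableEq ι]
    {X : ι → Type*} [∀ i, UniformSpace (X i)] [UniformSpace Y] {f : (∀ i, X i) → Y}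
    (hf : ∀ i, UniformEquicontinuous fun (x : ∀ i, X i) (y : X i) => f (Function.update x i y)) :
    UniformContinuous f := by
  have := Fintype.ofFinite ι
  suffices h : ∀ s : Finset ι, Tendsto
      (fun p : (∀ i, X i) × (∀ i, X i) => (f p.1, f (s.piecewise p.2 p.1))) (𝓤 (∀ i, X i)) (𝓤 Y) by
    simpa [UniformContinuous] using h Finset.univ
  intro s
  induction s using Finset.induction_on with
  | empty => simpa using tendsto_diag_uniformity (fun p : (∀ i, X i) × (∀ i, X i) => f p.1) _
  | insert j s hj ih =>
    refine ih.uniformity_trans (tendsto_def.2 fun V hV => ?_)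
    filter_upwards [(Pi.uniformContinuous_proj X j).eventually (hf j V hV)] with p hp
    have hself : Function.update (s.piecewise p.2 p.1) j (p.1 j) = s.piecewise p.2 p.1 := by
      rw [← Finset.piecewise_eq_of_notMem s p.2 p.1 hj, Function.update_eq_self]
    simpa only [Set.mem_preimage, Finset.piecewise_insert, hself] using
      hp (s.piecewise p.2 p.1)

end

theorem hfl_lt {b : ℝ} (hb : 0 < b) : (hfl b : ℝ) < b :=
  Nat.lt_ceil.1 (Nat.sub_lt (Nat.ceil_pos.2 hb) one_pos)

theorem le_hfl_add_one (b : ℝ) : b ≤ hfl b + 1 := by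
  have h : ⌈b⌉₊ ≤ hfl b + 1 := by unfold hfl; omega
  exact_mod_cast Nat.ceil_le.1 h

section TaylorPoly

theorem taylorPoly_self (f : ℝ → ℝ) (l : ℕ) (y : ℝ) : taylorPoly f l y y = f y := by
  simp [taylorPoly, Finset.sum_range_succ']

theorem taylorPoly_eq_taylorWithinEval {l : ℕ} {f : ℝ → ℝ} (hf : ContDiff ℝ l f) {s : Set ℝ}
    (hs : UniqueDiffOn ℝ s) {y' : ℝ} (hy' : y' ∈ s) (y : ℝ) :
    taylorPoly f l y' y = taylorWithinEval f l s y' y := by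
  rw [taylor_within_apply, taylorPoly]
  refine Finset.sum_congr rfl fun k hk => ?_
  have hkl : (k : WithTop ℕ∞) ≤ l := by exact_mod_cast Finset.mem_range_succ_iff.1 hk
  rw [iteratedDerivWithin_eq_iteratedDeriv hs (hf.of_le hkl).contDiffAt hy', smul_eq_mul]
  ring

theorem exists_polynomial_eval_sub_eq_taylorPoly (f : ℝ → ℝ) (l : ℕ) (y' : ℝ) :
    ∃ Q : Polynomial ℝ, Q.degree < (l + 1 : ℕ) ∧ ∀ y, taylorPoly f l y' y = Q.eval (y - y') := by
  refine ⟨∑ k : Fin (l + 1), Polynomial.C (iteratedDeriv k f y' / (k : ℕ).factorial) *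
    Polynomial.X ^ (k : ℕ), Polynomial.degree_sum_fin_lt _, fun y => ?_⟩
  simp [taylorPoly, Polynomial.eval_finsetSum, Finset.sum_range]

theorem taylorPoly_add {l : ℕ} {f g : ℝ → ℝ} (hf : ContDiff ℝ l f) (hg : ContDiff ℝ l g)
    (y' y : ℝ) :
    taylorPoly (fun z => f z + g z) l y' y = taylorPoly f l y' y + taylorPoly g l y' y := by
  unfold taylorPoly
  rw [← Finset.sum_add_distrib]
  refine Finset.sum_congr rfl fun k hk => ?_
  have hkl : (k : WithTop ℕ∞) ≤ l := by exact_mod_cast Finset.mem_range_succ_iff.1 hk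
  rw [iteratedDeriv_fun_add (hf.of_le hkl).contDiffAt (hg.of_le hkl).contDiffAt]
  ring

theorem taylorPoly_const_mul (a : ℝ) (f : ℝ → ℝ) (l : ℕ) (y' y : ℝ) :
    taylorPoly (fun z => a * f z) l y' y = a * taylorPoly f l y' y := by
  simp only [taylorPoly, iteratedDeriv_const_mul_field, Finset.mul_sum, mul_div_assoc, mul_assoc]

theorem taylorPoly_comp_mul_add {l : ℕ} {f : ℝ → ℝ} (hf : ContDiff ℝ l f) (m c y' y : ℝ) :
    taylorPoly (fun z => f (m * z + c)) l y' y = taylorPoly f l (m * y' + c) (m * y + c) := by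
  refine Finset.sum_congr rfl fun k hk => ?_
  have hkl : (k : WithTop ℕ∞) ≤ l := by exact_mod_cast Finset.mem_range_succ_iff.1 hk
  have hfk : ContDiff ℝ k fun z => f (z + c) :=
    (hf.of_le hkl).comp (contDiff_id.add contDiff_const)
  rw [congrFun (iteratedDeriv_comp_const_mul hfk m) y', iteratedDeriv_comp_add_const,
    add_sub_add_right_eq_sub, ← mul_sub, mul_pow]
  ring

theorem abs_sub_taylorPoly_le {l : ℕ} {f : ℝ → ℝ} (hf : ContDiff ℝ (l + 1) f) {M : ℝ}
    (hM : ∀ y, |iteratedDeriv (l + 1) f y| ≤ M) (y y' : ℝ) :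
    |f y - taylorPoly f l y' y| ≤ M * |y - y'| ^ (l + 1) := by
  rcases eq_or_ne y' y with rfl | hne
  · simp [taylorPoly_self]
  obtain ⟨z, -, hz⟩ := taylor_mean_remainder_lagrange_iteratedDeriv hne hf.contDiffOn
  rw [taylorPoly_eq_taylorWithinEval hf.of_succ (uniqueDiffOn_uIcc hne) Set.left_mem_uIcc, hz,
    abs_div, abs_mul, abs_pow, Nat.abs_cast]
  calc |iteratedDeriv (l + 1) f z| * |y - y'| ^ (l + 1) / (l + 1).factorial
      ≤ |iteratedDeriv (l + 1) f z| * |y - y'| ^ (l + 1) :=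
        div_le_self (by positivity) (by exact_mod_cast (l + 1).factorial_pos)
    _ ≤ M * |y - y'| ^ (l + 1) := by gcongr; exact hM z

theorem abs_taylorPoly_le {l : ℕ} {f : ℝ → ℝ} {M : ℝ}
    (hM : ∀ k ≤ l, ∀ y, |iteratedDeriv k f y| ≤ M) {y y' : ℝ} (hy : 1 ≤ |y - y'|) :
    |taylorPoly f l y' y| ≤ (l + 1) * M * |y - y'| ^ l := by
  have hM0 : 0 ≤ M := (abs_nonneg _).trans (hM 0 l.zero_le 0)
  calc |taylorPoly f l y' y|
      ≤ ∑ k ∈ Finset.range (l + 1), |iteratedDeriv k f y' / k.factorial * (y - y') ^ k| :=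
        Finset.abs_sum_le_sum_abs _ _
    _ ≤ ∑ _k ∈ Finset.range (l + 1), M * |y - y'| ^ l := by
        refine Finset.sum_le_sum fun k hk => ?_
        have hkl : k ≤ l := Finset.mem_range_succ_iff.1 hk
        rw [abs_mul, abs_div, abs_pow, Nat.abs_cast]
        have hcoeff : |iteratedDeriv k f y'| / k.factorial ≤ M :=
          (div_le_self (abs_nonneg _) (by exact_mod_cast k.factorial_pos)).trans (hM k hkl y')
        gcongr
    _ = (l + 1) * M * |y - y'| ^ l := by
        simp only [Finset.sum_const, Finset.card_range, nsmul_eq_mul, Nat.cast_succ, mul_assoc]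

end TaylorPoly

/-- One-dimensional Hölder condition of order `b` with constant `L`: `HolderAniso d β L f` says that
every slice of `f` along the `i`-th coordinate satisfies it with order `β i`. -/
def HolderSlice (b L : ℝ) (f : ℝ → ℝ) : Prop :=
  ContDiff ℝ (hfl b) f ∧ ∀ y y' : ℝ, |f y - taylorPoly f (hfl b) y' y| ≤ L * |y - y'| ^ b

namespace HolderSlice

variable {b L L' : ℝ} {f g : ℝ → ℝ}

theorem mono (hf : HolderSlice b L f) (hL : L ≤ L') : HolderSlice b L' f :=
  ⟨hf.1, fun y y' => (hf.2 y y').trans (by gcongr)⟩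

theorem nonneg (hf : HolderSlice b L f) : 0 ≤ L := by
  simpa using (abs_nonneg _).trans (hf.2 1 0)

theorem add (hf : HolderSlice b L f) (hg : HolderSlice b L' g) :
    HolderSlice b (L + L') fun z => f z + g z := by
  refine ⟨hf.1.add hg.1, fun y y' => ?_⟩
  rw [taylorPoly_add hf.1 hg.1, add_mul, add_sub_add_comm]
  exact (abs_add_le _ _).trans (add_le_add (hf.2 y y') (hg.2 y y'))

theorem const_mul (hf : HolderSlice b L f) (a : ℝ) :
    HolderSlice b (|a| * L) fun z => a * f z := by
  refine ⟨contDiff_const.mul hf.1, fun y y' => ?_⟩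
  rw [taylorPoly_const_mul, ← mul_sub, abs_mul, mul_assoc]
  exact mul_le_mul_of_nonneg_left (hf.2 y y') (abs_nonneg a)

theorem comp_mul_add (hf : HolderSlice b L f) (m c : ℝ) :
    HolderSlice b (|m| ^ b * L) fun z => f (m * z + c) := by
  refine ⟨hf.1.comp ((contDiff_const.mul contDiff_id).add contDiff_const), fun y y' => ?_⟩
  rw [taylorPoly_comp_mul_add hf.1]
  calc |f (m * y + c) - taylorPoly f (hfl b) (m * y' + c) (m * y + c)|
      ≤ L * |m * y + c - (m * y' + c)| ^ b := hf.2 _ _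
    _ = |m| ^ b * L * |y - y'| ^ b := by
      rw [add_sub_add_right_eq_sub, ← mul_sub, abs_mul,
        Real.mul_rpow (abs_nonneg _) (abs_nonneg _)]
      ring

theorem of_iteratedDeriv_le (hb : 0 < b) (hf : ContDiff ℝ (hfl b + 1) f) {M : ℝ}
    (hM : ∀ k ≤ hfl b + 1, ∀ y, |iteratedDeriv k f y| ≤ M) :
    HolderSlice b ((hfl b + 2) * M) f := by
  have hM0 : 0 ≤ M := (abs_nonneg _).trans (hM 0 (Nat.zero_le _) 0)
  refine ⟨hf.of_succ, fun y y' => ?_⟩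
  rcases le_total |y - y'| 1 with hnear | hfar
  · have hpow : |y - y'| ^ (hfl b + 1) ≤ |y - y'| ^ b := by
      exact_mod_cast Real.rpow_le_rpow_of_exponent_ge_of_imp (abs_nonneg (y - y')) hnear
        (le_hfl_add_one b) (fun _ h => absurd h (Nat.cast_add_one_ne_zero (hfl b)))
    calc |f y - taylorPoly f (hfl b) y' y| ≤ M * |y - y'| ^ (hfl b + 1) :=
          abs_sub_taylorPoly_le hf (hM _ le_rfl) y y'
      _ ≤ (hfl b + 2) * M * |y - y'| ^ b := by
          gcongr
          nlinarith
  · have hpow : |y - y'| ^ hfl b ≤ |y - y'| ^ b := by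
      simpa using Real.rpow_le_rpow_of_exponent_le hfar (hfl_lt hb).le
    calc |f y - taylorPoly f (hfl b) y' y| ≤ |f y| + |taylorPoly f (hfl b) y' y| := abs_sub _ _
      _ ≤ M * 1 + (hfl b + 1) * M * |y - y'| ^ hfl b := by
          gcongr
          · simpa using hM 0 (Nat.zero_le _) y
          · exact abs_taylorPoly_le (fun k hk => hM k (by omega)) hfar
      _ ≤ M * |y - y'| ^ b + (hfl b + 1) * M * |y - y'| ^ b := by
          gcongr
          exact Real.one_le_rpow hfar hb.le
      _ = (hfl b + 2) * M * |y - y'| ^ b := by ring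

theorem exists_of_hasCompactSupport (hb : 0 < b) (hf : ContDiff ℝ (hfl b + 1) f)
    (hf' : HasCompactSupport f) : ∃ L, HolderSlice b L f := by
  have hbound (k : Fin (hfl b + 2)) : ∃ M, ∀ y, |iteratedDeriv k f y| ≤ M := by
    have hk : (k : WithTop ℕ∞) ≤ hfl b + 1 := by exact_mod_cast Nat.lt_succ_iff.1 k.2
    simpa only [norm_iteratedFDeriv_eq_norm_iteratedDeriv, Real.norm_eq_abs] using
      (hf'.iteratedFDeriv k).exists_bound_of_continuous (hf.continuous_iteratedFDeriv hk)
  choose M hM using hbound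
  refine ⟨_, of_iteratedDeriv_le (M := ∑ k, |M k|) hb hf fun k hk y => ?_⟩
  let i : Fin (hfl b + 2) := ⟨k, Nat.lt_succ_of_le hk⟩
  calc |iteratedDeriv k f y| ≤ |M i| := (hM i y).trans (le_abs_self _)
    _ ≤ ∑ k, |M k| :=
      Finset.single_le_sum (f := fun k => |M k|) (fun _ _ => abs_nonneg _) (Finset.mem_univ i)

theorem exists_forall_of_hasCompactSupport {ι : Type*} [Finite ι] {β : ι → ℝ}
    (hβ : ∀ i, 0 < β i) (hf : ∀ n : ℕ, ContDiff ℝ n f) (hf' : HasCompactSupport f) :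
    ∃ G, 0 < G ∧ ∀ i, HolderSlice (β i) G f := by
  choose G hG using fun i =>
    exists_of_hasCompactSupport (hβ i) (by exact_mod_cast hf (hfl (β i) + 1)) hf'
  obtain ⟨M, hM⟩ := Finite.exists_le G
  exact ⟨max 1 M, by positivity, fun i => (hG i).mono ((hM i).trans (le_max_right 1 M))⟩

/-- The increment is read off the Taylor polynomial `Q` at `y'`: its values at `0, …, ⌊b⌋` are
controlled by `M` and `L`, and they determine `Q`. -/
theorem abs_sub_le (hf : HolderSlice b L f) (hb : 0 < b) {M : ℝ} (hM : ∀ y, |f y| ≤ M) (y y' : ℝ) :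
    |f y - f y'| ≤ L * |y - y'| ^ b + (M + L * (hfl b : ℝ) ^ b) *
      ∑ j ∈ Finset.range (hfl b + 1),
        |(Lagrange.basis (Finset.range (hfl b + 1)) (Nat.cast : ℕ → ℝ) j).eval (y - y') -
          (Lagrange.basis (Finset.range (hfl b + 1)) (Nat.cast : ℕ → ℝ) j).eval 0| := by
  have hL := hf.nonneg
  obtain ⟨Q, hdeg, hQ⟩ := exists_polynomial_eval_sub_eq_taylorPoly f (hfl b) y'
  have hQ0 : f y' = Q.eval 0 := by rw [← sub_self y', ← hQ, taylorPoly_self]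
  have hnode (j : ℕ) (hj : j ∈ Finset.range (hfl b + 1)) :
      |Q.eval (j : ℝ)| ≤ M + L * (hfl b : ℝ) ^ b := by
    have hjb : (j : ℝ) ≤ hfl b := by exact_mod_cast Finset.mem_range_succ_iff.1 hj
    have hrem := hf.2 (y' + j) y'
    rw [hQ, add_sub_cancel_left, Nat.abs_cast] at hrem
    calc |Q.eval (j : ℝ)| = |f (y' + j) - (f (y' + j) - Q.eval (j : ℝ))| := by
          rw [sub_sub_cancel]
      _ ≤ |f (y' + j)| + |f (y' + j) - Q.eval (j : ℝ)| := abs_sub _ _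
      _ ≤ M + L * (j : ℝ) ^ b := add_le_add (hM _) hrem
      _ ≤ M + L * (hfl b : ℝ) ^ b := by gcongr
  calc |f y - f y'| = |(f y - taylorPoly f (hfl b) y' y) + (Q.eval (y - y') - Q.eval 0)| := by
        rw [hQ, hQ0, sub_add_sub_cancel]
    _ ≤ |f y - taylorPoly f (hfl b) y' y| + |Q.eval (y - y') - Q.eval 0| := abs_add_le _ _
    _ ≤ _ := add_le_add (hf.2 y y') (abs_eval_sub_eval_le_sum_lagrange_basis
        Nat.cast_injective.injOn (by simpa using hdeg) hnode _ _)

theorem uniformEquicontinuous (hb : 0 < b) (L M : ℝ) :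
    {f : ℝ → ℝ | HolderSlice b L f ∧ ∀ y, |f y| ≤ M}.UniformEquicontinuous := by
  set ω : ℝ → ℝ := fun u => L * |u| ^ b + (M + L * (hfl b : ℝ) ^ b) *
      ∑ j ∈ Finset.range (hfl b + 1),
        |(Lagrange.basis (Finset.range (hfl b + 1)) (Nat.cast : ℕ → ℝ) j).eval u -
          (Lagrange.basis (Finset.range (hfl b + 1)) (Nat.cast : ℕ → ℝ) j).eval 0| with hω
  have hcont : Continuous ω := by
    have := Real.continuous_rpow_const hb.le
    fun_prop
  have hω0 : ω 0 = 0 := by simp [hω, hb.ne']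
  refine Metric.uniformEquicontinuous_iff.2 fun ε hε => ?_
  obtain ⟨ρ, hρ, hsmall⟩ := Metric.continuousAt_iff.1 (hcont.continuousAt (x := 0)) ε hε
  refine ⟨ρ, hρ, fun y y' hy ⟨f, hf, hM⟩ => ?_⟩
  have hlt := hsmall (x := y - y') (by simpa [Real.dist_eq] using hy)
  rw [hω0, Real.dist_0_eq_abs] at hlt
  exact (hf.abs_sub_le hb hM y y').trans_lt ((le_abs_self _).trans_lt hlt)

end HolderSlice

namespace HolderAniso

variable {d : ℕ} {β : Vec d} {L L' : ℝ} {f g : Vec d → ℝ}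

theorem iff_holderSlice :
    HolderAniso d β L f ↔ ∀ i x, HolderSlice (β i) L (sliceFun f i x) :=
  ⟨fun h i x => ⟨(h i).1 x, (h i).2 x⟩, fun h i => ⟨fun x => (h i x).1, fun x => (h i x).2⟩⟩

theorem mono (hf : HolderAniso d β L f) (hL : L ≤ L') : HolderAniso d β L' f :=
  iff_holderSlice.2 fun i x => (iff_holderSlice.1 hf i x).mono hL

theorem add (hf : HolderAniso d β L f) (hg : HolderAniso d β L' g) :
    HolderAniso d β (L + L') fun x => f x + g x :=
  iff_holderSlice.2 fun i x => (iff_holderSlice.1 hf i x).add (iff_holderSlice.1 hg i x)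

theorem const_mul (hf : HolderAniso d β L f) (a : ℝ) :
    HolderAniso d β (|a| * L) fun x => a * f x :=
  iff_holderSlice.2 fun i x => (iff_holderSlice.1 hf i x).const_mul a

theorem comp_dilation (hβ : ∀ i, 0 ≤ β i) (hf : HolderAniso d β L f) {l : ℝ} (hl0 : 0 ≤ l)
    (hl1 : l ≤ 1) (t x₀ : Vec d) : HolderAniso d β L fun x => f (l • (x - t) + x₀) := by
  refine iff_holderSlice.2 fun i x => ?_
  have hslice : sliceFun (fun x => f (l • (x - t) + x₀)) i x =
      fun y => sliceFun f i (l • (x - t) + x₀) (l * y + (x₀ i - l * t i)) := by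
    funext y
    refine congrArg f (funext fun j => ?_)
    rcases eq_or_ne j i with rfl | hji
    · simp only [Pi.add_apply, Pi.smul_apply, Pi.sub_apply, Function.update_self, smul_eq_mul]
      ring
    · simp only [Pi.add_apply, Pi.smul_apply, Pi.sub_apply, Function.update_of_ne hji]
  rw [hslice]
  have hfi := iff_holderSlice.1 hf i (l • (x - t) + x₀)
  refine (hfi.comp_mul_add l _).mono (mul_le_of_le_one_left hfi.nonneg ?_)
  rw [abs_of_nonneg hl0]
  exact Real.rpow_le_one hl0 hl1 (hβ i)

theorem uniformContinuous (hβ : ∀ i, 0 < β i) (hf : HolderAniso d β L f) {M : ℝ}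
    (hM : ∀ x, |f x| ≤ M) : UniformContinuous f :=
  uniformContinuous_of_uniformEquicontinuous_update fun i =>
    (HolderSlice.uniformEquicontinuous (hβ i) L M).comp
      fun x => ⟨sliceFun f i x, iff_holderSlice.1 hf i x, fun _ => hM _⟩

end HolderAniso

/-- A smooth function with support in `[-1, 1]`, peak value `1` at `0` and vanishing integral: the
difference of two disjoint translates of a bump function. -/
noncomputable def profile (y : ℝ) : ℝ :=
  let φ : ContDiffBump (0 : ℝ) := ⟨1 / 8, 1 / 4, by norm_num, by norm_num⟩
  φ y - φ (y - 1 / 2)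

section Profile

theorem contDiff_profile {n : ℕ∞} : ContDiff ℝ n profile :=
  (ContDiffBump.contDiff _).sub
    ((ContDiffBump.contDiff _).comp (contDiff_id.sub contDiff_const))

theorem profile_zero : profile 0 = 1 := by
  rw [profile, ContDiffBump.one_of_mem_closedBall, ContDiffBump.zero_of_le_dist, sub_zero] <;>
    norm_num

theorem abs_profile_le_one (y : ℝ) : |profile y| ≤ 1 :=
  abs_sub_le_of_nonneg_of_le (ContDiffBump.nonneg _) (ContDiffBump.le_one _)
    (ContDiffBump.nonneg _) (ContDiffBump.le_one _)

theorem profile_eq_zero_of_one_lt_abs {y : ℝ} (hy : 1 < |y|) : profile y = 0 := by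
  have hy' : |y| - |1 / 2| ≤ |y - 1 / 2| := abs_sub_abs_le_abs_sub y (1 / 2)
  rw [abs_of_pos (one_half_pos (α := ℝ))] at hy'
  rw [profile, ContDiffBump.zero_of_le_dist, ContDiffBump.zero_of_le_dist, sub_zero] <;>
    rw [dist_zero_right, Real.norm_eq_abs] <;> linarith

theorem hasCompactSupport_profile : HasCompactSupport profile :=
  HasCompactSupport.intro (isCompact_Icc (a := -1) (b := 1)) fun _ hy =>
    profile_eq_zero_of_one_lt_abs (not_le.1 fun h => hy (abs_le.1 h))

theorem integral_profile : ∫ y, profile y = 0 := by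
  unfold profile
  rw [integral_sub (ContDiffBump.integrable _) ((ContDiffBump.integrable _).comp_sub_right _),
    integral_sub_right_eq_self, sub_self]

end Profile

/-- The anisotropic bump of height `η` centred at `t` with half-width `w i` in the `i`-th
coordinate: the product of rescaled profiles. -/
noncomputable def bump {d : ℕ} (η : ℝ) (w t : Vec d) (x : Vec d) : ℝ :=
  η * ∏ i, profile ((w i)⁻¹ * (x i - t i))

section Bump

variable {d : ℕ} {η : ℝ} {w t : Vec d}

theorem continuous_bump : Continuous (bump η w t) := by
  have hprofile : Continuous profile := (contDiff_profile (n := 0)).continuous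
  unfold bump
  fun_prop

theorem bump_self : bump η w t t = η := by
  simp [bump, profile_zero]

theorem abs_prod_profile_le_one {ι : Type*} (s : Finset ι) (y : ι → ℝ) :
    |∏ i ∈ s, profile (y i)| ≤ 1 := by
  rw [Finset.abs_prod]
  exact Finset.prod_le_one (fun _ _ => abs_nonneg _) fun i _ => abs_profile_le_one _

theorem abs_bump_le (x : Vec d) : |bump η w t x| ≤ |η| := by
  rw [bump, abs_mul]
  exact mul_le_of_le_one_right (abs_nonneg η) (abs_prod_profile_le_one _ _)

theorem bump_eq_zero_of_notMem_Icc (hw : ∀ i, 0 < w i) {x : Vec d}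
    (hx : x ∉ Set.Icc (t - w) (t + w)) : bump η w t x = 0 := by
  have hfar : ∃ i, w i < |x i - t i| := by
    contrapose! hx
    refine ⟨fun i => ?_, fun i => ?_⟩
    · exact sub_le_iff_le_add.2 (sub_le_iff_le_add'.1 (abs_sub_le_iff.1 (hx i)).2)
    · exact sub_le_iff_le_add'.1 (abs_sub_le_iff.1 (hx i)).1
  obtain ⟨i, hi⟩ := hfar
  refine mul_eq_zero_of_right η (Finset.prod_eq_zero (Finset.mem_univ i) ?_)
  refine profile_eq_zero_of_one_lt_abs ?_
  rwa [abs_mul, abs_of_pos (inv_pos.2 (hw i)), one_lt_inv_mul₀ (hw i)]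

theorem integrable_bump (hw : ∀ i, 0 < w i) : Integrable (bump η w t) :=
  continuous_bump.integrable_of_hasCompactSupport
    (HasCompactSupport.intro isCompact_Icc fun _ => bump_eq_zero_of_notMem_Icc hw)

theorem integral_bump [NeZero d] : ∫ x, bump η w t x = 0 := by
  unfold bump
  rw [integral_const_mul,
    integral_fintype_prod_volume_eq_prod fun i y => profile ((w i)⁻¹ * (y - t i)),
    Finset.prod_eq_zero (Finset.mem_univ 0), mul_zero]
  rw [integral_sub_right_eq_self (fun y => profile ((w 0)⁻¹ * y)),
    Measure.integral_comp_mul_left, integral_profile, smul_zero]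

theorem holderAniso_bump {β : Vec d} {G K : ℝ} (hG : ∀ i, HolderSlice (β i) G profile)
    (hK : ∀ i, |η| * |(w i)⁻¹| ^ β i * G ≤ K) : HolderAniso d β K (bump η w t) := by
  refine HolderAniso.iff_holderSlice.2 fun i x => ?_
  set A : ℝ := ∏ j ∈ Finset.univ.erase i, profile ((w j)⁻¹ * (x j - t j))
  have hslice : sliceFun (bump η w t) i x =
      fun y => η * A * profile ((w i)⁻¹ * y + -((w i)⁻¹ * t i)) := by
    funext y
    have herase : ∏ j ∈ Finset.univ.erase i,
        profile ((w j)⁻¹ * (Function.update x i y j - t j)) = A :=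
      Finset.prod_congr rfl fun j hj => by
        rw [Function.update_of_ne (Finset.ne_of_mem_erase hj)]
    rw [sliceFun, bump, ← Finset.mul_prod_erase _ _ (Finset.mem_univ i), herase,
      Function.update_self, mul_sub, sub_eq_add_neg]
    ring
  rw [hslice]
  refine (((hG i).comp_mul_add _ _).const_mul (η * A)).mono (le_trans ?_ (hK i))
  have hA : |A| ≤ 1 := abs_prod_profile_le_one _ fun j => (w j)⁻¹ * (x j - t j)
  have hG0 : 0 ≤ G := (hG i).nonneg
  calc |η * A| * (|(w i)⁻¹| ^ β i * G) = |η| * |(w i)⁻¹| ^ β i * G * |A| := by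
        rw [abs_mul]; ring
    _ ≤ |η| * |(w i)⁻¹| ^ β i * G := mul_le_of_le_one_right (by positivity) hA

end Bump

/-- Second-moment domination: `1 + χ²(ν ‖ μ) ≤ C`, written in the variational form
`(∫ F dν)² ≤ C ∫ F² dμ`, which tensorizes and applies to events without densities. -/
def SqDominated {α : Type*} [MeasurableSpace α] (ν μ : Measure α) (C : ℝ≥0∞) : Prop :=
  ∀ F : α → ℝ≥0∞, Measurable F → (∫⁻ x, F x ∂ν) ^ 2 ≤ C * ∫⁻ x, F x ^ 2 ∂μ

theorem sq_lintegral_mul_le {α : Type*} [MeasurableSpace α] {μ : Measure α} {f g : α → ℝ≥0∞}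
    (hf : AEMeasurable f μ) (hg : AEMeasurable g μ) :
    (∫⁻ x, f x * g x ∂μ) ^ 2 ≤ (∫⁻ x, f x ^ 2 ∂μ) * ∫⁻ x, g x ^ 2 ∂μ := by
  have hholder := ENNReal.lintegral_mul_le_Lp_mul_Lq μ Real.HolderConjugate.two_two hf hg
  have hsqrt (a : ℝ≥0∞) : (a ^ (1 / 2 : ℝ)) ^ 2 = a := by
    rw [← ENNReal.rpow_natCast, ← ENNReal.rpow_mul]
    norm_num
  calc (∫⁻ x, f x * g x ∂μ) ^ 2
      ≤ ((∫⁻ x, f x ^ (2 : ℝ) ∂μ) ^ (1 / 2 : ℝ) * (∫⁻ x, g x ^ (2 : ℝ) ∂μ) ^ (1 / 2 : ℝ)) ^ 2 :=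
        pow_le_pow_left' hholder 2
    _ = (∫⁻ x, f x ^ 2 ∂μ) * ∫⁻ x, g x ^ 2 ∂μ := by
      rw [mul_pow, hsqrt, hsqrt]
      simp only [ENNReal.rpow_two]

theorem lintegral_pi_fin_succAbove {n : ℕ} {α : Fin (n + 1) → Type*}
    [∀ i, MeasurableSpace (α i)] (μ : ∀ i, Measure (α i)) [∀ i, SigmaFinite (μ i)]
    {F : (∀ i, α i) → ℝ≥0∞} (hF : Measurable F) (i : Fin (n + 1)) :
    ∫⁻ x, F x ∂Measure.pi μ =
      ∫⁻ a, ∫⁻ x, F (i.insertNth a x) ∂(Measure.pi fun j => μ (i.succAbove j)) ∂(μ i) := by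
  have hpres := (measurePreserving_piFinSuccAbove μ i).symm
  rw [← hpres.lintegral_comp hF]
  exact lintegral_prod _ (hF.comp hpres.measurable).aemeasurable

namespace SqDominated

theorem mono {α : Type*} [MeasurableSpace α] {ν μ : Measure α} {C C' : ℝ≥0∞}
    (h : SqDominated ν μ C) (hC : C ≤ C') : SqDominated ν μ C' :=
  fun F hF => (h F hF).trans (mul_le_mul_left hC _)

theorem withDensity {α : Type*} [MeasurableSpace α] {μ : Measure α} {p q : α → ℝ}
    (hp : Measurable p) (hq : Measurable q) (hp0 : ∀ x, 0 ≤ p x) (hpq : ∀ x, p x = 0 → q x = 0) :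
    SqDominated (μ.withDensity fun x => ENNReal.ofReal (q x))
      (μ.withDensity fun x => ENNReal.ofReal (p x)) (∫⁻ x, ENNReal.ofReal (q x ^ 2 / p x) ∂μ) := by
  intro F hF
  rw [lintegral_withDensity_eq_lintegral_mul _ (by fun_prop) hF,
    lintegral_withDensity_eq_lintegral_mul _ (by fun_prop) (by fun_prop)]
  have hfactor (x : α) : ENNReal.ofReal (q x) * F x
      ≤ ENNReal.ofReal (|q x| / √(p x)) * (ENNReal.ofReal √(p x) * F x) := by
    rw [← mul_assoc, ← ENNReal.ofReal_mul (by positivity)]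
    gcongr
    rcases (hp0 x).eq_or_lt with h | h
    · simp [hpq x h.symm]
    · rw [div_mul_cancel₀ _ (Real.sqrt_ne_zero'.2 h)]
      exact le_abs_self _
  calc (∫⁻ x, ENNReal.ofReal (q x) * F x ∂μ) ^ 2
      ≤ (∫⁻ x, ENNReal.ofReal (|q x| / √(p x)) * (ENNReal.ofReal √(p x) * F x) ∂μ) ^ 2 :=
        pow_le_pow_left' (lintegral_mono hfactor) 2
    _ ≤ (∫⁻ x, ENNReal.ofReal (|q x| / √(p x)) ^ 2 ∂μ)
          * ∫⁻ x, (ENNReal.ofReal √(p x) * F x) ^ 2 ∂μ :=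
        sq_lintegral_mul_le (by fun_prop) (by fun_prop)
    _ = (∫⁻ x, ENNReal.ofReal (q x ^ 2 / p x) ∂μ)
          * ∫⁻ x, ENNReal.ofReal (p x) * F x ^ 2 ∂μ := by
      simp only [mul_pow, ← ENNReal.ofReal_pow (Real.sqrt_nonneg _), Real.sq_sqrt (hp0 _),
        ← ENNReal.ofReal_pow (div_nonneg (abs_nonneg _) (Real.sqrt_nonneg _)), div_pow, sq_abs]

theorem pi {n : ℕ} {α : Fin n → Type*} [∀ i, MeasurableSpace (α i)] {ν μ : ∀ i, Measure (α i)}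
    [∀ i, SigmaFinite (ν i)] [∀ i, SigmaFinite (μ i)] {C : Fin n → ℝ≥0∞}
    (h : ∀ i, SqDominated (ν i) (μ i) (C i)) :
    SqDominated (Measure.pi ν) (Measure.pi μ) (∏ i, C i) := by
  induction n with
  | zero =>
    intro F _
    simp [Measure.pi_of_empty ν, Measure.pi_of_empty μ]
  | succ n ih =>
    intro F hF
    have hG : Measurable fun q : α 0 × (∀ j : Fin n, α (Fin.succAbove 0 j)) =>
        F (Fin.insertNth 0 q.1 q.2) :=
      hF.comp (MeasurableEquiv.piFinSuccAbove α 0).symm.measurable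
    rw [lintegral_pi_fin_succAbove ν hF 0, lintegral_pi_fin_succAbove μ (hF.pow_const 2) 0,
      Fin.prod_univ_succAbove C 0, mul_assoc,
      ← lintegral_const_mul _ (hG.pow_const 2).lintegral_prod_right']
    exact (h 0 _ hG.lintegral_prod_right').trans <| mul_le_mul_right (lintegral_mono fun a =>
      ih (fun j => h (Fin.succAbove 0 j)) _ (hG.comp measurable_prodMk_left)) _

variable {α : Type*} [MeasurableSpace α] {ν μ : Measure α} {C : ℝ≥0∞}

theorem sq_measure_le (h : SqDominated ν μ C) {A : Set α} (hA : MeasurableSet A) :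
    ν A ^ 2 ≤ C * μ A := by
  have hsq : (fun x => A.indicator (1 : α → ℝ≥0∞) x ^ 2) = A.indicator 1 := by
    funext x
    by_cases hx : x ∈ A <;> simp [hx]
  simpa only [hsq, lintegral_indicator_one hA] using h _ (measurable_one.indicator hA)

theorem one_le [IsProbabilityMeasure ν] [IsProbabilityMeasure μ] (h : SqDominated ν μ C) :
    1 ≤ C := by
  simpa using h.sq_measure_le MeasurableSet.univ

theorem inv_le_measure_or_inv_le_measure_compl [IsProbabilityMeasure ν] [IsProbabilityMeasure μ]
    (h : SqDominated ν μ C) {A : Set α} (hA : MeasurableSet A) :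
    (4 * C)⁻¹ ≤ μ A ∨ (4 * C)⁻¹ ≤ ν Aᶜ := by
  refine or_iff_not_imp_left.2 fun hμA => ?_
  have hsq : ν A ^ 2 ≤ (2⁻¹) ^ 2 :=
    calc ν A ^ 2 ≤ C * μ A := h.sq_measure_le hA
      _ ≤ C * (4 * C)⁻¹ := mul_le_mul_right (not_le.1 hμA).le C
      _ = 4⁻¹ * (C * C⁻¹) := by
        rw [ENNReal.mul_inv (Or.inl four_ne_zero) (Or.inl ENNReal.ofNat_ne_top), mul_left_comm]
      _ ≤ 4⁻¹ * 1 := mul_le_mul_right (ENNReal.mul_inv_le_one C) _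
      _ = (2⁻¹) ^ 2 := by rw [mul_one, ← ENNReal.inv_pow]; norm_num
  have hνA : ν A ≤ 2⁻¹ := (ENNReal.pow_le_pow_left_iff two_ne_zero).1 hsq
  have hC : 2 ≤ 4 * C := by
    calc (2 : ℝ≥0∞) ≤ 4 * 1 := by norm_num
      _ ≤ 4 * C := mul_le_mul_right h.one_le 4
  calc (4 * C)⁻¹ ≤ 2⁻¹ := ENNReal.inv_le_inv.2 hC
    _ = 1 - 2⁻¹ := ENNReal.one_sub_inv_two.symm
    _ ≤ 1 - ν A := tsub_le_tsub_left hνA 1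
    _ = ν Aᶜ := (prob_compl_eq_one_sub hA).symm

end SqDominated

section Risk

variable {Ω : Type*} [MeasurableSpace Ω] {T : Ω → ℝ} {s r : ℝ}

theorem ofReal_rpow_mul_measure_le_lintegral {P : Measure Ω} (hT : Measurable T) (hs : 0 ≤ s)
    (hr : 0 ≤ r) (θ ψ : ℝ) :
    ENNReal.ofReal (s ^ r) * P {x | s ≤ |T x - θ| / ψ} ≤
      ∫⁻ x, ENNReal.ofReal ((|T x - θ| / ψ) ^ r) ∂P := by
  calc ENNReal.ofReal (s ^ r) * P {x | s ≤ |T x - θ| / ψ}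
      ≤ ENNReal.ofReal (s ^ r) *
          P {x | ENNReal.ofReal (s ^ r) ≤ ENNReal.ofReal ((|T x - θ| / ψ) ^ r)} := by
        gcongr with x
        intro hx
        gcongr
    _ ≤ ∫⁻ x, ENNReal.ofReal ((|T x - θ| / ψ) ^ r) ∂P :=
        mul_meas_ge_le_lintegral (by fun_prop) _

/-- Le Cam's two-point method: an estimator that is accurate under both laws would test between
them. -/
theorem SqDominated.le_risk_or_le_risk {μ ν : Measure Ω} [IsProbabilityMeasure μ]
    [IsProbabilityMeasure ν] {C : ℝ} (h : SqDominated ν μ (ENNReal.ofReal C)) (hT : Measurable T)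
    (hs : 0 ≤ s) (hr : 0 ≤ r) {θ₀ θ₁ ψ₀ ψ₁ : ℝ} (hψ₀ : 0 < ψ₀) (hψ₁ : 0 < ψ₁)
    (hsep : s * (ψ₀ + ψ₁) ≤ |θ₁ - θ₀|) :
    ENNReal.ofReal (s ^ r * (4 * C)⁻¹) ≤ ∫⁻ x, ENNReal.ofReal ((|T x - θ₀| / ψ₀) ^ r) ∂μ ∨
      ENNReal.ofReal (s ^ r * (4 * C)⁻¹) ≤ ∫⁻ x, ENNReal.ofReal ((|T x - θ₁| / ψ₁) ^ r) ∂ν := by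
  set A : Set Ω := {x | s ≤ |T x - θ₀| / ψ₀}
  have hA : MeasurableSet A := measurableSet_le measurable_const (by fun_prop)
  have hAc : Aᶜ ⊆ {x | s ≤ |T x - θ₁| / ψ₁} := by
    intro x hx
    have hx₀ : |T x - θ₀| < s * ψ₀ := (div_lt_iff₀ hψ₀).1 (not_le.1 hx)
    have htri : |θ₁ - θ₀| ≤ |T x - θ₁| + |T x - θ₀| := by
      rw [abs_sub_comm (T x) θ₁]
      exact abs_sub_le θ₁ (T x) θ₀
    exact (le_div_iff₀ hψ₁).2 (by linarith)
  have hC : 0 < C := one_pos.trans_le (ENNReal.one_le_ofReal.1 h.one_le)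
  rw [ENNReal.ofReal_mul (by positivity), ENNReal.ofReal_inv_of_pos (by positivity),
    ENNReal.ofReal_mul zero_le_four, ENNReal.ofReal_ofNat]
  refine (h.inv_le_measure_or_inv_le_measure_compl hA).imp (fun hμ => ?_) fun hν => ?_
  · exact (mul_le_mul_right hμ _).trans (ofReal_rpow_mul_measure_le_lintegral hT hs hr θ₀ ψ₀)
  · exact (mul_le_mul_right (hν.trans (measure_mono hAc)) _).trans
      (ofReal_rpow_mul_measure_le_lintegral hT hs hr θ₁ ψ₁)

end Risk

theorem lintegral_ofReal_sq_add_div_le {α : Type*} [MeasurableSpace α] {μ : Measure α}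
    {p h : α → ℝ} (hp : Integrable p μ) (hp0 : ∀ x, 0 ≤ p x) (hh : Integrable h μ)
    (hint : ∫ x, h x ∂μ = 0) {B : Set α} (hB : MeasurableSet B) (hBfin : μ B ≠ ⊤)
    (hsupp : ∀ x ∉ B, h x = 0) {η m : ℝ} (hη : ∀ x, |h x| ≤ η) (hm : 0 < m)
    (hpm : ∀ x ∈ B, m ≤ p x) :
    ∫⁻ x, ENNReal.ofReal ((p x + h x) ^ 2 / p x) ∂μ
      ≤ ENNReal.ofReal (∫ x, p x ∂μ + η ^ 2 / m * μ.real B) := by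
  have hpoint (x : α) :
      (p x + h x) ^ 2 / p x ≤ p x + 2 * h x + B.indicator (fun _ => η ^ 2 / m) x := by
    by_cases hx : x ∈ B
    · have hpx : 0 < p x := hm.trans_le (hpm x hx)
      have hsq : h x ^ 2 ≤ η ^ 2 := sq_le_sq.2 ((hη x).trans (le_abs_self η))
      rw [Set.indicator_of_mem hx]
      calc (p x + h x) ^ 2 / p x = p x + 2 * h x + h x ^ 2 / p x := by field_simp; ring
        _ ≤ p x + 2 * h x + η ^ 2 / m := by gcongr; exact hpm x hx
    · rw [Set.indicator_of_notMem hx, hsupp x hx]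
      simp [pow_two, mul_self_div_self]
  have hlin : Integrable (fun x => p x + 2 * h x) μ := hp.add (hh.const_mul 2)
  have hind : Integrable (B.indicator fun _ => η ^ 2 / m) μ :=
    (integrable_indicator_iff hB).2 (integrableOn_const hBfin)
  calc ∫⁻ x, ENNReal.ofReal ((p x + h x) ^ 2 / p x) ∂μ
      ≤ ∫⁻ x, ENNReal.ofReal (p x + 2 * h x + B.indicator (fun _ => η ^ 2 / m) x) ∂μ :=
        lintegral_mono fun x => ENNReal.ofReal_le_ofReal (hpoint x)
    _ = ENNReal.ofReal (∫ x, (p x + 2 * h x + B.indicator (fun _ => η ^ 2 / m) x) ∂μ) :=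
        (ofReal_integral_eq_lintegral_ofReal (hlin.add hind) (.of_forall fun x =>
          (div_nonneg (sq_nonneg _) (hp0 x)).trans (hpoint x))).symm
    _ = ENNReal.ofReal (∫ x, p x ∂μ + η ^ 2 / m * μ.real B) := by
        rw [integral_add hlin hind, integral_add hp (hh.const_mul 2), integral_const_mul, hint,
          integral_indicator hB, setIntegral_const, smul_eq_mul, mul_zero, add_zero, mul_comm]

namespace IsProbDensity

variable {d : ℕ} {p q : Vec d → ℝ}

theorem integrable (hp : IsProbDensity d p) : Integrable p :=
  .of_integral_ne_zero (hp.2.2 ▸ one_ne_zero)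

theorem isProbabilityMeasure_pdfMeasure (hp : IsProbDensity d p) :
    IsProbabilityMeasure (pdfMeasure d p) := by
  refine ⟨?_⟩
  rw [pdfMeasure, withDensity_apply _ MeasurableSet.univ, Measure.restrict_univ,
    ← ofReal_integral_eq_lintegral_ofReal hp.integrable (.of_forall hp.2.1), hp.2.2,
    ENNReal.ofReal_one]

theorem isProbabilityMeasure_jointMeasure (hp : IsProbDensity d p) (n : ℕ) :
    IsProbabilityMeasure (jointMeasure d n p) := by
  have := hp.isProbabilityMeasure_pdfMeasure
  unfold jointMeasure
  infer_instance

theorem dilate [NeZero d] (hp : IsProbDensity d p) {a : ℝ} (ha : 0 < a) (t x₀ : Vec d) :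
    IsProbDensity d fun x => a * p (a ^ (d⁻¹ : ℝ) • (x - t) + x₀) := by
  refine ⟨(hp.1.comp (by fun_prop)).const_mul a, fun x => mul_nonneg ha.le (hp.2.1 _), ?_⟩
  rw [integral_const_mul, integral_sub_right_eq_self (fun x => p (a ^ (d⁻¹ : ℝ) • x + x₀)) t,
    Measure.integral_comp_smul volume (fun x => p (x + x₀)), integral_add_right_eq_self p x₀,
    hp.2.2, Module.finrank_fin_fun, Real.rpow_inv_natCast_pow ha.le (NeZero.ne d),
    abs_of_pos (inv_pos.2 ha), smul_eq_mul, mul_one, mul_inv_cancel₀ ha.ne']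

theorem sqDominated_jointMeasure (hp : IsProbDensity d p) (hq : IsProbDensity d q)
    (hpq : ∀ x, p x = 0 → q x = 0) {χ : ℝ}
    (hχ : ∫⁻ x, ENNReal.ofReal (q x ^ 2 / p x) ≤ ENNReal.ofReal (1 + χ)) (n : ℕ) :
    SqDominated (jointMeasure d n q) (jointMeasure d n p) (ENNReal.ofReal (rexp (n * χ))) := by
  have := hp.isProbabilityMeasure_pdfMeasure
  have := hq.isProbabilityMeasure_pdfMeasure
  have hone : SqDominated (pdfMeasure d q) (pdfMeasure d p) (ENNReal.ofReal (rexp χ)) :=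
    (SqDominated.withDensity hp.1 hq.1 hp.2.1 hpq).mono
      (hχ.trans (ENNReal.ofReal_le_ofReal (by linarith [Real.add_one_le_exp χ])))
  have hprod : ∏ _i : Fin n, ENNReal.ofReal (rexp χ) = ENNReal.ofReal (rexp (n * χ)) := by
    rw [Fin.prod_const, ← ENNReal.ofReal_pow (Real.exp_nonneg χ), Real.exp_nat_mul]
  exact hprod ▸ SqDominated.pi fun _ => hone

variable {w t : Vec d} {η m : ℝ}

theorem add_bump [NeZero d] (hp : IsProbDensity d p) (hw : ∀ i, 0 < w i) (hη : |η| ≤ m)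
    (hpm : ∀ x ∈ Set.Icc (t - w) (t + w), m ≤ p x) :
    IsProbDensity d fun x => p x + bump η w t x := by
  refine ⟨hp.1.add continuous_bump.measurable, fun x => ?_, ?_⟩
  · by_cases hx : x ∈ Set.Icc (t - w) (t + w)
    · linarith [hpm x hx, (abs_le.1 (abs_bump_le (η := η) (w := w) (t := t) x)).1]
    · simpa only [bump_eq_zero_of_notMem_Icc hw hx, add_zero] using hp.2.1 x
  · rw [integral_add hp.integrable (integrable_bump hw), integral_bump, hp.2.2, add_zero]

theorem sqDominated_jointMeasure_add_bump [NeZero d] (hp : IsProbDensity d p)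
    (hw : ∀ i, 0 < w i) (hm : 0 < m) (hη : |η| ≤ m)
    (hpm : ∀ x ∈ Set.Icc (t - w) (t + w), m ≤ p x) (n : ℕ) :
    SqDominated (jointMeasure d n fun x => p x + bump η w t x) (jointMeasure d n p)
      (ENNReal.ofReal (rexp (n * (η ^ 2 / m * volume.real (Set.Icc (t - w) (t + w)))))) := by
  have hsupp (x : Vec d) (hx : x ∉ Set.Icc (t - w) (t + w)) : bump η w t x = 0 :=
    bump_eq_zero_of_notMem_Icc hw hx
  refine hp.sqDominated_jointMeasure (hp.add_bump hw hη hpm) (fun x hx => ?_) ?_ n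
  · rw [hx, hsupp x fun hmem => (hm.trans_le (hpm x hmem)).ne' hx, add_zero]
  · simpa only [hp.2.2, sq_abs] using lintegral_ofReal_sq_add_div_le hp.integrable hp.2.1
      (integrable_bump hw) integral_bump measurableSet_Icc isCompact_Icc.measure_lt_top.ne hsupp
      abs_bump_le hm hpm

end IsProbDensity

/-- The half-widths `u ^ (1 / β i)`, at which a bump of height proportional to `u` has Hölder
constant independent of `u`. -/
noncomputable def holderWidth {d : ℕ} (β : Vec d) (u : ℝ) : Vec d := fun i => u ^ (β i)⁻¹

section HolderWidth

open Filter Topology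

variable {d : ℕ} {β : Vec d} {u : ℝ}

theorem holderWidth_pos (β : Vec d) (hu : 0 < u) (i : Fin d) : 0 < holderWidth β u i :=
  Real.rpow_pos_of_pos hu _

theorem tendsto_holderWidth_zero (hβ : ∀ i, 0 < β i) : Tendsto (holderWidth β) (𝓝 0) (𝓝 0) := by
  refine tendsto_pi_nhds.2 fun i => ?_
  have hi : 0 < (β i)⁻¹ := inv_pos.2 (hβ i)
  simpa [holderWidth, Real.zero_rpow hi.ne'] using
    (Real.continuous_rpow_const hi.le).tendsto 0

theorem exists_forall_norm_holderWidth_le (hβ : ∀ i, 0 < β i) {ρ : ℝ} (hρ : 0 < ρ) :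
    ∃ ε, 0 < ε ∧ ∀ u, 0 < u → u < ε → ‖holderWidth β u‖ ≤ ρ := by
  obtain ⟨ε, hε, hball⟩ := Metric.tendsto_nhds_nhds.1 (tendsto_holderWidth_zero hβ) ρ hρ
  refine ⟨ε, hε, fun u hu huε => ?_⟩
  rw [← dist_zero_right]
  exact (hball (by rwa [Real.dist_0_eq_abs, abs_of_pos hu])).le

theorem volume_real_Icc_holderWidth (β t : Vec d) (hu : 0 < u) :
    volume.real (Set.Icc (t - holderWidth β u) (t + holderWidth β u)) =
      2 ^ d * u ^ ∑ i, (β i)⁻¹ := by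
  have hw (i : Fin d) : (t + holderWidth β u) i - (t - holderWidth β u) i = 2 * u ^ (β i)⁻¹ := by
    simp only [Pi.add_apply, Pi.sub_apply, holderWidth]
    ring
  have hle : t - holderWidth β u ≤ t + holderWidth β u := fun i => by
    linarith [hw i, Real.rpow_pos_of_pos hu (β i)⁻¹]
  rw [Measure.real, Real.volume_Icc_pi_toReal hle]
  simp only [hw, Finset.prod_mul_distrib, Fin.prod_const, Real.rpow_sum_of_pos hu]

theorem holderAniso_bump_holderWidth (hβ : ∀ i, β i ≠ 0) {G : ℝ}
    (hG : ∀ i, HolderSlice (β i) G profile) (η : ℝ) (hu : 0 < u) (t : Vec d) :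
    HolderAniso d β (|η| / u * G) (bump η (holderWidth β u) t) := by
  refine holderAniso_bump hG fun i => le_of_eq ?_
  rw [abs_of_pos (inv_pos.2 (holderWidth_pos β hu i)), holderWidth, ← Real.rpow_neg hu.le,
    ← Real.rpow_mul hu.le, neg_mul, inv_mul_cancel₀ (hβ i), Real.rpow_neg_one, div_eq_mul_inv]

end HolderWidth

theorem Icc_sub_add_subset_closedBall_norm {ι : Type*} [Fintype ι] (t w : ι → ℝ) :
    Set.Icc (t - w) (t + w) ⊆ Metric.closedBall t ‖w‖ := by
  intro x hx
  refine (dist_pi_le_iff (norm_nonneg w)).2 fun i => ?_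
  have hlo : t i - w i ≤ x i := hx.1 i
  have hhi : x i ≤ t i + w i := hx.2 i
  have hwi : w i ≤ ‖w‖ := (le_abs_self _).trans (norm_le_pi_norm w i)
  exact (abs_le.2 ⟨by linarith, by linarith⟩)

section PsiRate

variable {n : ℕ} {x y : ℝ}

theorem psiRate_pos (hn : 1 ≤ n) (bb : ℝ) (hx : 0 < x) : 0 < psiRate n bb x := by
  have : (0 : ℝ) < n := by exact_mod_cast hn
  exact lt_min hx (by positivity)

theorem psiRate_mono (n : ℕ) {bb : ℝ} (hbb : 0 ≤ bb) (hx : 0 ≤ x) (hxy : x ≤ y) :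
    psiRate n bb x ≤ psiRate n bb y := by
  unfold psiRate
  gcongr

theorem mul_psiRate_rpow_le (hn : 1 ≤ n) {S : ℝ} (hS : 0 < S) (hx : 0 < x) :
    n * psiRate n S⁻¹ x ^ (2 + S) ≤ x := by
  have hn0 : (0 : ℝ) < n := by exact_mod_cast hn
  rw [← le_div_iff₀' hn0]
  calc psiRate n S⁻¹ x ^ (2 + S)
      ≤ ((x / n) ^ (S⁻¹ / (2 * S⁻¹ + 1))) ^ (2 + S) :=
        Real.rpow_le_rpow (psiRate_pos hn _ hx).le (min_le_right _ _) (by positivity)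
    _ = x / n := by
      rw [← Real.rpow_mul (by positivity),
        show S⁻¹ / (2 * S⁻¹ + 1) * (2 + S) = 1 by field_simp, Real.rpow_one]

end PsiRate

section Construction

open Filter Topology

variable {d : ℕ} {β : Vec d} {L : ℝ}

/-- `c1const` is a real `sSup`, which is `0` on an empty or unbounded set, so its positivity
already says that it is the supremum of the values of densities of the class. -/
theorem isLUB_c1const (hc : 0 < c1const d β L) :
    IsLUB {c | ∃ p x, Pclass d β L p ∧ c = p x} (c1const d β L) := by
  refine isLUB_csSup (Set.nonempty_iff_ne_empty.2 fun hempty => hc.ne' ?_) (not_imp_comm.1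
    Real.sSup_of_not_bddAbove hc.ne')
  rw [c1const, hempty, Real.sSup_empty]

theorem exists_pclass_lt_apply (hc : 0 < c1const d β L) {u : ℝ} (hu : u < c1const d β L) :
    ∃ p x, Pclass d β L p ∧ u < p x := by
  obtain ⟨_, ⟨p, x, hp, rfl⟩, hux⟩ := (lt_isLUB_iff (isLUB_c1const hc)).1 hu
  exact ⟨p, x, hp, hux⟩

theorem Pclass.continuous (hβ : ∀ i, 0 < β i) (hc : 0 < c1const d β L) {p : Vec d → ℝ}
    (hp : Pclass d β L p) : Continuous p := by
  refine (hp.2.uniformContinuous hβ (M := c1const d β L) fun x => ?_).continuous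
  rw [abs_of_nonneg (hp.1.2.1 x)]
  exact (isLUB_c1const hc).1 ⟨p, x, hp, rfl⟩

theorem Pclass.dilate [NeZero d] (hβ : ∀ i, 0 ≤ β i) {p : Vec d → ℝ} (hp : Pclass d β L p)
    {a : ℝ} (ha0 : 0 < a) (ha1 : a ≤ 1) (t x₀ : Vec d) :
    Pclass d β (a * L) fun x => a * p (a ^ (d⁻¹ : ℝ) • (x - t) + x₀) := by
  have hl : a ^ (d⁻¹ : ℝ) ≤ 1 := Real.rpow_le_one ha0.le ha1 (by positivity)
  have haniso := (hp.2.comp_dilation hβ (Real.rpow_nonneg ha0.le _) hl t x₀).const_mul a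
  rw [abs_of_pos ha0] at haniso
  exact ⟨hp.1.dilate ha0 t x₀, haniso⟩

/-- Dilating a density that nearly attains `c1const` brings its peak down to `δ / 2` and lowers
its Hölder constant, which leaves room for a perturbation inside the class. -/
theorem exists_radius_forall_exists_pclass [NeZero d] (hβ : ∀ i, 0 < β i) (hL : 0 ≤ L)
    (hc : 0 < c1const d β L) :
    ∃ ρ, 0 < ρ ∧ ∀ (t : Vec d) (δ : ℝ), 0 < δ → δ ≤ c1const d β L →
      ∃ p, Pclass d β (3 / 4 * L) p ∧ p t = δ / 2 ∧ ∀ x ∈ Metric.closedBall t ρ, δ / 4 ≤ p x := by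
  obtain ⟨f, x₀, hf, hpeak⟩ :=
    exists_pclass_lt_apply hc (show 2 / 3 * c1const d β L < c1const d β L by linarith)
  have hf0 : 0 < f x₀ := lt_trans (by positivity) hpeak
  obtain ⟨ρ, hρ, hball⟩ := Metric.nhds_basis_closedBall.eventually_iff.1
    ((hf.continuous hβ hc).continuousAt.eventually_const_lt (half_lt_self hf0))
  refine ⟨ρ, hρ, fun t δ hδ hδc => ?_⟩
  set a : ℝ := δ / (2 * f x₀)
  have ha0 : 0 < a := by positivity
  have ha : a ≤ 3 / 4 := (div_le_iff₀ (by positivity)).2 (by linarith)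
  have hpeak' : a * f x₀ = δ / 2 := by simp only [a]; field_simp
  have hdilate := hf.dilate (fun i => (hβ i).le) ha0 (by linarith) t x₀
  refine ⟨_, ⟨hdilate.1, hdilate.2.mono (by gcongr)⟩, ?_, fun x hx => ?_⟩
  · simpa only [sub_self, smul_zero, zero_add] using hpeak'
  · have hl : a ^ (d⁻¹ : ℝ) ≤ 1 := Real.rpow_le_one ha0.le (by linarith) (by positivity)
    have hmem : a ^ (d⁻¹ : ℝ) • (x - t) + x₀ ∈ Metric.closedBall x₀ ρ := by
      rw [mem_closedBall_iff_norm, add_sub_cancel_right, norm_smul,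
        Real.norm_of_nonneg (by positivity)]
      exact (mul_le_of_le_one_left (norm_nonneg _) hl).trans (mem_closedBall_iff_norm.1 hx)
    calc δ / 4 = a * (f x₀ / 2) := by linarith
      _ ≤ a * f (a ^ (d⁻¹ : ℝ) • (x - t) + x₀) := by gcongr; exact (hball hmem).le

theorem exists_pos_le_mul_rpow_le_one_mul_lt (A B : ℝ) {s ε : ℝ} (hs : 0 < s) (hε : 0 < ε) :
    ∃ c : ℝ, 0 < c ∧ c ≤ 1 / 4 ∧ A * c ^ s ≤ 1 ∧ B * c < ε := by
  have hpow : Tendsto (fun c : ℝ => A * c ^ s) (𝓝 0) (𝓝 0) := by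
    simpa [Real.zero_rpow hs.ne'] using
      ((Real.continuous_rpow_const hs.le).tendsto 0).const_mul A
  have hlin : Tendsto (fun c : ℝ => B * c) (𝓝 0) (𝓝 0) := by
    simpa using (continuous_const_mul B).tendsto 0
  have hsmall : ∀ᶠ c : ℝ in 𝓝[>] 0, c ≤ 1 / 4 ∧ A * c ^ s ≤ 1 ∧ B * c < ε :=
    nhdsWithin_le_nhds <| (eventually_le_nhds (by norm_num)).and <|
      (hpow.eventually_le_const one_pos).and (hlin.eventually_lt_const hε)
  exact (eventually_mem_nhdsWithin.and hsmall).exists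

theorem mul_chiSq_le_one {n : ℕ} (hn : 1 ≤ n) {S κ c δ : ℝ} (hS : 0 < S) (hκ : 0 < κ) (hc : 0 < c)
    (hδ : 0 < δ) (hsmall : 4 * 2 ^ d * κ ^ S * c ^ (2 + S) ≤ 1) :
    n * ((c * psiRate n S⁻¹ δ) ^ 2 / (δ / 4) *
      (2 ^ d * (κ * (c * psiRate n S⁻¹ δ)) ^ S)) ≤ 1 := by
  have hψ : 0 < psiRate n S⁻¹ δ := psiRate_pos hn _ hδ
  have hrate := mul_psiRate_rpow_le hn hS hδ
  set ψ := psiRate n S⁻¹ δ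
  calc n * ((c * ψ) ^ 2 / (δ / 4) * (2 ^ d * (κ * (c * ψ)) ^ S))
      = 4 * 2 ^ d * κ ^ S * c ^ (2 + S) * (n * ψ ^ (2 + S) / δ) := by
        rw [Real.mul_rpow hκ.le (by positivity), Real.mul_rpow hc.le hψ.le, Real.rpow_add hc,
          Real.rpow_add hψ, Real.rpow_two, Real.rpow_two]
        field_simp
    _ ≤ 1 * 1 := by gcongr; exact (div_le_one hδ).2 hrate
    _ = 1 := one_mul 1

theorem Pclass.exists_sqDominated_perturbation [NeZero d] (hβ : ∀ i, 0 < β i) {p : Vec d → ℝ}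
    (hp : Pclass d β L p) {G K : ℝ} (hG0 : 0 < G) (hG : ∀ i, HolderSlice (β i) G profile)
    (hK : 0 < K) {m η : ℝ} (hη : 0 < η) (hηm : η ≤ m) {t : Vec d}
    (hpm : ∀ x ∈ Metric.closedBall t ‖holderWidth β (G / K * η)‖, m ≤ p x) (n : ℕ) :
    ∃ q, Pclass d β (L + K) q ∧ q t = p t + η ∧
      SqDominated (jointMeasure d n q) (jointMeasure d n p)
        (ENNReal.ofReal (rexp (n * (η ^ 2 / m * (2 ^ d * (G / K * η) ^ ∑ i, (β i)⁻¹))))) := by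
  have hu : 0 < G / K * η := by positivity
  set w : Vec d := holderWidth β (G / K * η)
  have hw : ∀ i, 0 < w i := holderWidth_pos β hu
  have hη' : |η| ≤ m := (abs_of_pos hη).trans_le hηm
  have hpw : ∀ x ∈ Set.Icc (t - w) (t + w), m ≤ p x := fun x hx =>
    hpm x (Icc_sub_add_subset_closedBall_norm t w hx)
  have hbump : HolderAniso d β K (bump η w t) := by
    refine (holderAniso_bump_holderWidth (fun i => (hβ i).ne') hG η hu t).mono (le_of_eq ?_)
    rw [abs_of_pos hη]
    field_simp
  refine ⟨fun x => p x + bump η w t x, ⟨hp.1.add_bump hw hη' hpw, hp.2.add hbump⟩,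
    congrArg (p t + ·) bump_self, ?_⟩
  rw [← volume_real_Icc_holderWidth β t hu]
  exact hp.1.sqDominated_jointMeasure_add_bump hw (hη.trans_le hηm) hη' hpw n

theorem exists_sqDominated_pair [NeZero d] (hβ : ∀ i, 0 < β i) (hL : 0 < L)
    (hc₁ : 0 < c1const d β L) :
    ∃ c, 0 < c ∧ ∀ (t : Vec d) (n : ℕ), 1 ≤ n → ∀ δ, 0 < δ → δ ≤ c1const d β L →
      ∃ p q, Pclass d β L p ∧ Pclass d β L q ∧ p t ∈ Set.Icc (δ / 2) δ ∧
        q t ∈ Set.Icc (δ / 2) δ ∧ c * psiRate n (betaBar β) δ ≤ |q t - p t| ∧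
        SqDominated (jointMeasure d n q) (jointMeasure d n p) (ENNReal.ofReal (rexp 1)) := by
  obtain ⟨ρ, hρ, hbase⟩ := exists_radius_forall_exists_pclass hβ hL.le hc₁
  obtain ⟨G, hG0, hG⟩ := HolderSlice.exists_forall_of_hasCompactSupport hβ
    (fun _ => contDiff_profile) hasCompactSupport_profile
  obtain ⟨ε, hε, hwidth⟩ := exists_forall_norm_holderWidth_le hβ hρ
  have hS : 0 < ∑ i, (β i)⁻¹ := Finset.sum_pos (fun i _ => inv_pos.2 (hβ i)) Finset.univ_nonempty
  set κ : ℝ := G / (1 / 4 * L)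
  have hκ : 0 < κ := by positivity
  obtain ⟨c, hc, hc4, hcS, hcε⟩ := exists_pos_le_mul_rpow_le_one_mul_lt
    (4 * 2 ^ d * κ ^ ∑ i, (β i)⁻¹) (κ * c1const d β L) (add_pos two_pos hS) hε
  refine ⟨c, hc, fun t n hn δ hδ hδc => ?_⟩
  obtain ⟨p, hp, hpt, hpm⟩ := hbase t δ hδ hδc
  have hψ : 0 < psiRate n (betaBar β) δ := psiRate_pos hn _ hδ
  have hψδ : psiRate n (betaBar β) δ ≤ δ := min_le_left _ _
  have hχ := mul_chiSq_le_one (d := d) hn hS hκ hc hδ hcS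
  rw [← betaBar] at hχ
  set η : ℝ := c * psiRate n (betaBar β) δ
  have hη : 0 < η := mul_pos hc hψ
  have hηδ : η ≤ 1 / 4 * δ := mul_le_mul hc4 hψδ hψ.le (by norm_num)
  have hκη : κ * η < ε :=
    calc κ * η ≤ κ * (c * c1const d β L) :=
          mul_le_mul_of_nonneg_left (mul_le_mul_of_nonneg_left (hψδ.trans hδc) hc.le) hκ.le
      _ < ε := by linarith
  have hball := Metric.closedBall_subset_closedBall (x := t) (hwidth (κ * η) (by positivity) hκη)
  obtain ⟨q, hq, hqt, hpq⟩ := hp.exists_sqDominated_perturbation hβ hG0 hG (by positivity) hη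
    (hηδ.trans_eq (by ring)) (fun x hx => hpm x (hball hx)) n
  refine ⟨p, q, ⟨hp.1, hp.2.mono (by linarith)⟩, ⟨hq.1, hq.2.mono (by linarith)⟩,
    ⟨hpt.ge, by linarith⟩, ⟨by linarith, by linarith⟩, ?_,
    hpq.mono (ENNReal.ofReal_le_ofReal (Real.exp_le_exp.2 hχ))⟩
  rw [hqt, add_sub_cancel_left, abs_of_pos hη]

end Construction

theorem statement0_general (d : ℕ) (hd : 1 ≤ d) (β : Vec d) (hβ : ∀ i, 0 < β i)
    (L : ℝ) (hL : 0 < L) (r : ℝ) (hr : 0 ≤ r) :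
    ∃ (c2 : ℝ) (n0 : ℕ), 0 < c2 ∧
      ∀ (t : Vec d) (n : ℕ), n0 ≤ n →
        ∀ δ : ℝ, 0 < δ → δ ≤ c1const d β L →
          ∀ T : Sample d n → ℝ, Measurable T →
            ∃ p : Vec d → ℝ, Pclass d β L p ∧ δ / 2 ≤ p t ∧ p t ≤ δ ∧
              ENNReal.ofReal c2 ≤
                ∫⁻ X, ENNReal.ofReal
                  ((|T X - p t| / psiRate n (betaBar β) (p t)) ^ r)
                  ∂(jointMeasure d n p) := by
  have : NeZero d := ⟨by omega⟩
  rcases le_or_gt (c1const d β L) 0 with hc₁ | hc₁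
  · exact ⟨1, 0, one_pos, fun t n _ δ hδ hδc => absurd (hδ.trans_le hδc) hc₁.not_gt⟩
  obtain ⟨c, hc, hpair⟩ := exists_sqDominated_pair hβ hL hc₁
  refine ⟨(c / 2) ^ r * (4 * rexp 1)⁻¹, 1, by positivity, fun t n hn δ hδ hδc T hT => ?_⟩
  obtain ⟨p, q, hp, hq, ⟨hpδ, hpδ'⟩, ⟨hqδ, hqδ'⟩, hpq, hdom⟩ := hpair t n hn δ hδ hδc
  have hp0 : 0 < p t := (half_pos hδ).trans_le hpδ
  have hq0 : 0 < q t := (half_pos hδ).trans_le hqδ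
  have hβbar : 0 ≤ betaBar β := inv_nonneg.2 (Finset.sum_nonneg fun i _ => inv_nonneg.2 (hβ i).le)
  have hsep : c / 2 * (psiRate n (betaBar β) (p t) + psiRate n (betaBar β) (q t)) ≤ |q t - p t| :=
    calc c / 2 * (psiRate n (betaBar β) (p t) + psiRate n (betaBar β) (q t))
        ≤ c / 2 * (psiRate n (betaBar β) δ + psiRate n (betaBar β) δ) := by
          gcongr <;> exact psiRate_mono n hβbar (by positivity) ‹_›
      _ ≤ |q t - p t| := by linarith
  have := hp.1.isProbabilityMeasure_jointMeasure n
  have := hq.1.isProbabilityMeasure_jointMeasure n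
  rcases hdom.le_risk_or_le_risk hT (by positivity) hr (psiRate_pos hn _ hp0)
    (psiRate_pos hn _ hq0) hsep with hrisk | hrisk
  · exact ⟨p, hp, hpδ, hpδ', hrisk⟩
  · exact ⟨q, hq, hqδ, hqδ', hrisk⟩

/-- Theorem 3.1, new weighted lower risk bound.
For `0 < β_i ≤ 2`, `L > 0`, `r ≥ 1` there are `c₂(β,L,r) > 0` and `n₀(β,L)` such that for
every `t`, every `n ≥ n₀`, every `0 < δ ≤ c₁(β,L)` and every estimator `T`, some density
`p ∈ 𝒫_d(β,L)` with `δ/2 ≤ p(t) ≤ δ` has normalized risk at least `c₂`. -/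
theorem statement0 (d : ℕ) (hd : 1 ≤ d) (β : Vec d) (hβ : ∀ i, 0 < β i ∧ β i ≤ 2)
    (L : ℝ) (hL : 0 < L) (r : ℝ) (hr : 1 ≤ r) :
    ∃ (c2 : ℝ) (n0 : ℕ), 0 < c2 ∧
      ∀ (t : Vec d) (n : ℕ), n0 ≤ n →
        ∀ δ : ℝ, 0 < δ → δ ≤ c1const d β L →
          ∀ T : Sample d n → ℝ, Measurable T →
            ∃ p : Vec d → ℝ, Pclass d β L p ∧ δ / 2 ≤ p t ∧ p t ≤ δ ∧
              ENNReal.ofReal c2 ≤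
                ∫⁻ X, ENNReal.ofReal
                  ((|T X - p t| / psiRate n (betaBar β) (p t)) ^ r)
                  ∂(jointMeasure d n p) :=
  statement0_general d hd β (fun i => (hβ i).1) L hL r (zero_le_one.trans hr)
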